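/- Let q > 1, M ≥ 1, and let f : [0,1) → (0,∞) be non-decreasing and satisfy, for every subinterval (a,b) ⊆ [0,1), the inequality ((1/(b−a)) ∫_a^b f(y) dy) · ((1/(b−a)) ∫_a^b f(y)^{-1/(q-1)} dy)^{q-1} ≤ M. Let p_0 ∈ [1,q] be the root of ((q−p_0)/(q−1))·(M·p_0)^{1/(q-1)} = 1. Then for every p ∈ (p_0, q] there exists a constant M' = M'(p,q,M) > 0 such that for every subinterval (a,b) ⊆ [0,1): ((1/(b−a)) ∫_a^b f(y) dy) · ((1/(b−a)) ∫_a^b f(y)^{-1/(p-1)} dy)^{p-1} ≤ M'; in particular f^{-1/(p-1)} is integrable on (0,1). -/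

import Mathlib

open MeasureTheory Set

/-!
Put `r = q - 1` and `g = f ^ (-1 / r)`, and let `A t`, `B t` be the means of `f`, `g` over `(a, t)`.
The model weights are `f = (y - a) ^ (r * w)`, `g = (y - a) ^ (-w)`, for which
`A t * B t ^ r` is the constant `((1 + r * w) * (1 - w) ^ r)⁻¹`; this equals `M` at the critical
value `w = (p₀ - 1) / (q - 1)` and exceeds it beyond.

If `M * ((1 + r * w) * (1 - w) ^ r) ≤ 1`, the weighted AM-GM inequality applied to the logarithmic
derivatives of `∫ f` and `∫ g` produces a logarithmic potential which is monotone in `t` and which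
is constant for the model weights. Up to `log (A t * B t ^ r)`, which lies in `[0, log M]`, it is a
positive multiple of `log (B t * (t - a) ^ w)`. Hence `B t` is at most a constant times
`B b * ((b - a) / (t - a)) ^ w`. Since `g` is antitone, `g t ≤ B t`, so `g` is no more singular at
`a` than `(t - a) ^ (-w)`, and its power `r / (p - 1)` is integrable, with a uniform bound, as soon
as `r * w < p - 1`. As `p > p₀`, such a `w` exists just above the critical value.
-/

section AbsolutelyContinuous

theorem le_of_absolutelyContinuousOnInterval_of_ae_deriv_nonneg {f : ℝ → ℝ} {a b : ℝ}
    (hab : a ≤ b) (hf : AbsolutelyContinuousOnInterval f a b)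
    (hf' : ∀ᵐ x, x ∈ Ioo a b → 0 ≤ deriv f x) : f a ≤ f b := by
  rw [← sub_nonneg, ← hf.integral_deriv_eq_sub, intervalIntegral.integral_of_le hab,
    integral_Ioc_eq_integral_Ioo]
  exact setIntegral_nonneg_of_ae_restrict ((ae_restrict_iff' measurableSet_Ioo).2 hf')

theorem absolutelyContinuousOnInterval_comp_of_lipschitzOnWith {X Y : Type*}
    [PseudoMetricSpace X] [PseudoMetricSpace Y] {φ : X → Y} {f : ℝ → X} {a b : ℝ} {K : NNReal}
    (hφ : LipschitzOnWith K φ (f '' uIcc a b)) (hf : AbsolutelyContinuousOnInterval f a b) :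
    AbsolutelyContinuousOnInterval (fun x => φ (f x)) a b := by
  refine squeeze_zero' (.of_forall fun E => Finset.sum_nonneg fun _ _ => dist_nonneg) ?_
    (by simpa only [mul_zero] using Filter.Tendsto.const_mul (K : ℝ) hf)
  filter_upwards [Filter.mem_inf_of_right (Filter.mem_principal_self _)] with E hE
  rw [Finset.mul_sum]
  exact Finset.sum_le_sum fun i hi =>
    hφ.dist_le_mul _ (mem_image_of_mem f (hE.1 i hi).1) _ (mem_image_of_mem f (hE.1 i hi).2)

theorem absolutelyContinuousOnInterval_comp_of_contDiffOn {E : Type*} [NormedAddCommGroup E]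
    [NormedSpace ℝ E] {φ : ℝ → E} {f : ℝ → ℝ} {a b : ℝ} (hφ : ContDiffOn ℝ 1 φ (f '' uIcc a b))
    (hf : AbsolutelyContinuousOnInterval f a b) :
    AbsolutelyContinuousOnInterval (fun x => φ (f x)) a b := by
  obtain ⟨K, hK⟩ := hφ.exists_lipschitzOnWith one_ne_zero
    (isPreconnected_uIcc.image f hf.continuousOn).convex (isCompact_uIcc.image_of_continuousOn
      hf.continuousOn)
  exact absolutelyContinuousOnInterval_comp_of_lipschitzOnWith hK hf

theorem absolutelyContinuousOnInterval_log {f : ℝ → ℝ} {a b : ℝ}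
    (hf : AbsolutelyContinuousOnInterval f a b) (h0 : ∀ x ∈ uIcc a b, f x ≠ 0) :
    AbsolutelyContinuousOnInterval (fun x => Real.log (f x)) a b := by
  have hlog : ContDiffOn ℝ 1 Real.log (f '' uIcc a b) :=
    Real.contDiffOn_log.mono (image_subset_iff.2 h0)
  exact absolutelyContinuousOnInterval_comp_of_contDiffOn hlog hf

end AbsolutelyContinuous

section LogPrimitive

variable {f : ℝ → ℝ} {a s t : ℝ}

theorem integral_pos_of_mem_Ioc (hf : IntervalIntegrable f volume a t)
    (hpos : ∀ x ∈ Ioo a t, 0 < f x) (hs : s ∈ Ioc a t) : 0 < ∫ y in a..s, f y :=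
  intervalIntegral.intervalIntegral_pos_of_pos_on
    (hf.mono_set (uIcc_subset_uIcc_left (Icc_subset_uIcc ⟨hs.1.le, hs.2⟩)))
    (fun x hx => hpos x ⟨hx.1, hx.2.trans_le hs.2⟩) hs.1

theorem absolutelyContinuousOnInterval_log_integral (hf : IntervalIntegrable f volume a t)
    (hpos : ∀ x ∈ Ioo a t, 0 < f x) (has : a < s) (hst : s ≤ t) :
    AbsolutelyContinuousOnInterval (fun x => Real.log (∫ y in a..x, f y)) s t := by
  have hsub : uIcc s t ⊆ uIcc a t := uIcc_subset_uIcc_right (Icc_subset_uIcc ⟨has.le, hst⟩)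
  refine absolutelyContinuousOnInterval_log
    ((hf.absolutelyContinuousOnInterval_intervalIntegral left_mem_uIcc).mono hsub) fun x hx => ?_
  rw [uIcc_of_le hst] at hx
  exact (integral_pos_of_mem_Ioc hf hpos ⟨has.trans_le hx.1, hx.2⟩).ne'

theorem ae_hasDerivAt_log_integral (hf : IntervalIntegrable f volume a t)
    (hpos : ∀ x ∈ Ioo a t, 0 < f x) :
    ∀ᵐ x, x ∈ Ioo a t →
      HasDerivAt (fun x => Real.log (∫ y in a..x, f y)) (f x / ∫ y in a..x, f y) x := by
  filter_upwards [hf.ae_hasDerivAt_integral] with x hderiv hx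
  exact (hderiv (Ioo_subset_Icc_self.trans Icc_subset_uIcc hx) a left_mem_uIcc).log
    (integral_pos_of_mem_Ioc hf hpos ⟨hx.1, hx.2.le⟩).ne'

end LogPrimitive

section WeightedAMGM

theorem mul_rpow_rpow_inv_le {x y r : ℝ} (hx : 0 ≤ x) (hy : 0 ≤ y) (hr : 0 ≤ r) :
    (x * y ^ r) ^ (1 + r)⁻¹ ≤ (x + r * y) / (1 + r) := by
  have h := Real.geom_mean_le_arith_mean2_weighted (w₁ := (1 + r)⁻¹) (w₂ := r * (1 + r)⁻¹)
    (by positivity) (by positivity) hx hy (by field_simp)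
  calc (x * y ^ r) ^ (1 + r)⁻¹ = x ^ (1 + r)⁻¹ * y ^ (r * (1 + r)⁻¹) := by
        rw [Real.mul_rpow hx (by positivity), Real.rpow_mul hy]
    _ ≤ (x + r * y) / (1 + r) := h.trans_eq (by field_simp)

theorem one_add_le_add_mul_of_one_le_mul_rpow {x y r : ℝ} (hx : 0 ≤ x) (hy : 0 ≤ y) (hr : 0 ≤ r)
    (h : 1 ≤ x * y ^ r) : 1 + r ≤ x + r * y := by
  have h₁ := (Real.one_le_rpow h (by positivity)).trans (mul_rpow_rpow_inv_le hx hy hr)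
  rwa [one_le_div (by positivity)] at h₁

theorem mul_rpow_le_one_of_add_mul_le {x y r : ℝ} (hx : 0 ≤ x) (hy : 0 ≤ y) (hr : 0 ≤ r)
    (h : x + r * y ≤ 1 + r) : x * y ^ r ≤ 1 := by
  have h₁ := (mul_rpow_rpow_inv_le hx hy hr).trans (div_le_one_of_le₀ h (by positivity))
  contrapose! h₁
  exact Real.one_lt_rpow h₁ (by positivity)

theorem antitoneOn_one_add_mul_mul_one_sub_rpow {r : ℝ} (hr : 0 ≤ r) :
    AntitoneOn (fun w : ℝ => (1 + r * w) * (1 - w) ^ r) (Ico 0 1) := by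
  rintro u ⟨hu0, hu1⟩ w ⟨hw0, hw1⟩ huw
  have hv : 0 < 1 - u := sub_pos.2 hu1
  have hratio : (1 + r * w) / (1 + r * u) * ((1 - w) / (1 - u)) ^ r ≤ 1 := by
    refine mul_rpow_le_one_of_add_mul_le (by positivity)
      (div_nonneg (sub_nonneg.2 hw1.le) hv.le) hr ?_
    have hdiff : 1 + r - ((1 + r * w) / (1 + r * u) + r * ((1 - w) / (1 - u)))
        = r * (1 + r) * u * (w - u) / ((1 + r * u) * (1 - u)) := by
      field_simp
      ring
    have : 0 ≤ r * (1 + r) * u * (w - u) / ((1 + r * u) * (1 - u)) := by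
      have := sub_nonneg.2 huw
      positivity
    linarith
  rwa [Real.div_rpow (sub_nonneg.2 hw1.le) hv.le, div_mul_div_comm,
    div_le_one (by positivity)] at hratio

theorem le_div_add_mul_div_of_mul_rpow_le {u v A B r w : ℝ} (hr : 0 ≤ r) (hw0 : 0 ≤ w) (hw1 : w < 1)
    (hu : 0 ≤ u) (hv : 0 ≤ v) (hA : 0 < A) (hB : 0 < B) (huv : 1 ≤ u * v ^ r)
    (hAB : A * B ^ r * ((1 + r * w) * (1 - w) ^ r) ≤ 1) :
    (1 + r) * (1 + r * w) ≤ u / A + r * (1 + r * w) / (1 - w) * (v / B) := by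
  have hw' : 0 < 1 - w := sub_pos.2 hw1
  have hone : 1 ≤ u / (A * (1 + r * w)) * (v / (B * (1 - w))) ^ r := by
    rw [Real.div_rpow hv (by positivity), Real.mul_rpow hB.le hw'.le, div_mul_div_comm,
      one_le_div (by positivity)]
    calc A * (1 + r * w) * (B ^ r * (1 - w) ^ r)
        = A * B ^ r * ((1 + r * w) * (1 - w) ^ r) := by ring
      _ ≤ u * v ^ r := hAB.trans huv
  have h := one_add_le_add_mul_of_one_le_mul_rpow (by positivity) (by positivity) hr hone
  calc (1 + r) * (1 + r * w)
      ≤ (u / (A * (1 + r * w)) + r * (v / (B * (1 - w)))) * (1 + r * w) := by gcongr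
    _ = u / A + r * (1 + r * w) / (1 - w) * (v / B) := by field_simp

end WeightedAMGM

section Average

variable {f g : ℝ → ℝ} {a b : ℝ}

theorem intervalAverage_pos (hab : a < b) (hf : IntervalIntegrable f volume a b)
    (hpos : ∀ x ∈ Ioo a b, 0 < f x) : 0 < ⨍ y in a..b, f y := by
  rw [interval_average_eq_div]
  exact div_pos (integral_pos_of_mem_Ioc hf hpos ⟨hab, le_rfl⟩) (sub_pos.2 hab)

theorem intervalAverage_mono_on_Ioo (hab : a < b) (hf : IntervalIntegrable f volume a b)
    (hg : IntervalIntegrable g volume a b) (h : ∀ x ∈ Ioo a b, f x ≤ g x) :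
    ⨍ y in a..b, f y ≤ ⨍ y in a..b, g y := by
  rw [interval_average_eq_div, interval_average_eq_div]
  exact div_le_div_of_nonneg_right
    (intervalIntegral.integral_mono_on_of_le_Ioo hab.le hf hg h) (sub_pos.2 hab).le

theorem intervalAverage_const (hab : a < b) (c : ℝ) : ⨍ _ in a..b, c = c := by
  rw [interval_average_eq_div, intervalIntegral.integral_const, smul_eq_mul,
    mul_div_cancel_left₀ _ (sub_pos.2 hab).ne']

theorem le_intervalAverage_of_antitoneOn (hab : a < b) (hg : AntitoneOn g (Ioc a b))
    (hgi : IntervalIntegrable g volume a b) : g b ≤ ⨍ y in a..b, g y := by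
  rw [← intervalAverage_const hab (g b)]
  exact intervalAverage_mono_on_Ioo hab intervalIntegrable_const hgi fun x hx =>
    hg (Ioo_subset_Ioc_self hx) ⟨hab, le_rfl⟩ hx.2.le

-- At `y = a` the two sides agree because of the conventions `x / 0 = 0` and `0⁻¹ = 0`.
theorem div_sub_rpow_eqOn_Icc (hab : a ≤ b) (w : ℝ) :
    EqOn (fun y => ((b - a) / (y - a)) ^ w) (fun y => (b - a) ^ w * (y - a) ^ (-w)) (Icc a b) :=
  fun y hy => by
    have hya := sub_nonneg.2 hy.1
    dsimp only
    rw [Real.div_rpow (sub_nonneg.2 hab) hya, Real.rpow_neg hya, div_eq_mul_inv]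

theorem intervalIntegrable_div_sub_rpow (hab : a ≤ b) {w : ℝ} (hw : w < 1) :
    IntervalIntegrable (fun y => ((b - a) / (y - a)) ^ w) volume a b := by
  have h := (intervalIntegral.intervalIntegrable_rpow' (a := a - a) (b := b - a)
    (neg_lt_neg hw)).comp_sub_right a
  rw [sub_add_cancel, sub_add_cancel] at h
  refine (h.const_mul ((b - a) ^ w)).congr fun y hy => ?_
  rw [uIoc_of_le hab] at hy
  exact (div_sub_rpow_eqOn_Icc hab w (Ioc_subset_Icc_self hy)).symm

theorem intervalAverage_div_sub_rpow (hab : a < b) {w : ℝ} (hw : w < 1) :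
    ⨍ y in a..b, ((b - a) / (y - a)) ^ w = (1 - w)⁻¹ := by
  have hba := sub_pos.2 hab
  have hw' := sub_pos.2 hw
  rw [interval_average_eq_div, intervalIntegral.integral_congr
    (by simpa only [uIcc_of_le hab.le] using div_sub_rpow_eqOn_Icc hab.le w),
    intervalIntegral.integral_const_mul,
    intervalIntegral.integral_comp_sub_right (fun y => y ^ (-w)), sub_self,
    integral_rpow (.inl (neg_lt_neg hw)), neg_add_eq_sub, Real.zero_rpow hw'.ne', sub_zero,
    mul_div_assoc', ← Real.rpow_add hba, add_sub_cancel, Real.rpow_one]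
  field_simp

end Average

/-- The two-weight Muckenhoupt functional on `(a, b)`. The `A_q` product of a single weight `f` is
the case `r = q - 1`, `g = f ^ (-1 / r)`. -/
noncomputable def muckenhouptProduct (r : ℝ) (f g : ℝ → ℝ) (a b : ℝ) : ℝ :=
  (⨍ y in a..b, f y) * (⨍ y in a..b, g y) ^ r

/-- A logarithmic combination of the primitives of `f` and `g`, with exponents chosen so that it is
constant in `t` for the extremal power weights `f = (· - a) ^ (r * w)`, `g = (· - a) ^ (-w)`. -/
noncomputable def muckenhouptPotential (r w : ℝ) (f g : ℝ → ℝ) (a t : ℝ) : ℝ :=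
  Real.log (∫ y in a..t, f y) + r * (1 + r * w) / (1 - w) * Real.log (∫ y in a..t, g y)
    - (1 + r) * (1 + r * w) * Real.log (t - a)

/-- Positive integrable weights `f`, `g` on a nonempty interval `(a, b)` to which Jensen's
inequality for `muckenhouptProduct r f g` applies. A single weight `f` gives the pair with
`g = f ^ (-1 / r)`, for which `one_le_mul_rpow` is an equality. -/
structure IsMuckenhouptPair (r : ℝ) (f g : ℝ → ℝ) (a b : ℝ) : Prop where
  lt : a < b
  left_integrable : IntervalIntegrable f volume a b
  right_integrable : IntervalIntegrable g volume a b
  left_pos : ∀ x ∈ Ioo a b, 0 < f x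
  right_pos : ∀ x ∈ Ioo a b, 0 < g x
  one_le_mul_rpow : ∀ x ∈ Ioo a b, 1 ≤ f x * g x ^ r

namespace IsMuckenhouptPair

variable {f g : ℝ → ℝ} {a b r w M : ℝ}

theorem of_mem_Ioc (h : IsMuckenhouptPair r f g a b) {t : ℝ} (ht : t ∈ Ioc a b) :
    IsMuckenhouptPair r f g a t where
  lt := ht.1
  left_integrable := h.left_integrable.mono_set
    (uIcc_subset_uIcc_left (Icc_subset_uIcc ⟨ht.1.le, ht.2⟩))
  right_integrable := h.right_integrable.mono_set
    (uIcc_subset_uIcc_left (Icc_subset_uIcc ⟨ht.1.le, ht.2⟩))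
  left_pos x hx := h.left_pos x ⟨hx.1, hx.2.trans_le ht.2⟩
  right_pos x hx := h.right_pos x ⟨hx.1, hx.2.trans_le ht.2⟩
  one_le_mul_rpow x hx := h.one_le_mul_rpow x ⟨hx.1, hx.2.trans_le ht.2⟩

theorem average_left_pos (h : IsMuckenhouptPair r f g a b) : 0 < ⨍ y in a..b, f y :=
  intervalAverage_pos h.lt h.left_integrable h.left_pos

theorem average_right_pos (h : IsMuckenhouptPair r f g a b) : 0 < ⨍ y in a..b, g y :=
  intervalAverage_pos h.lt h.right_integrable h.right_pos

theorem one_le_muckenhouptProduct (h : IsMuckenhouptPair r f g a b) (hr : 0 ≤ r) :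
    1 ≤ muckenhouptProduct r f g a b := by
  set A := ⨍ y in a..b, f y with hA
  set B := ⨍ y in a..b, g y with hB
  have hA0 : 0 < A := h.average_left_pos
  have hB0 : 0 < B := h.average_right_pos
  have hpoint : ∀ x ∈ Ioo a b,
      ((A * B ^ r)⁻¹) ^ (1 + r)⁻¹ ≤ (f x / A + r * (g x / B)) / (1 + r) := fun x hx => by
    have hfx := h.left_pos x hx
    have hgx := h.right_pos x hx
    refine le_trans (Real.rpow_le_rpow (by positivity) ?_ (by positivity))
      (mul_rpow_rpow_inv_le (by positivity) (by positivity) hr)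
    rw [Real.div_rpow hgx.le hB0.le, div_mul_div_comm, inv_eq_one_div]
    gcongr
    exact h.one_le_mul_rpow x hx
  have hfA := h.left_integrable.div_const A
  have hgB := (h.right_integrable.div_const B).const_mul r
  have hmean : ⨍ y in a..b, (f y / A + r * (g y / B)) / (1 + r) = 1 := by
    have hba : b - a ≠ 0 := (sub_pos.2 h.lt).ne'
    rw [interval_average_eq_div, eq_div_iff hba] at hA hB
    rw [interval_average_eq_div, intervalIntegral.integral_div,
      intervalIntegral.integral_add hfA hgB, intervalIntegral.integral_const_mul,
      intervalIntegral.integral_div, intervalIntegral.integral_div, ← hA, ← hB]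
    field_simp
  have hle := intervalAverage_mono_on_Ioo h.lt intervalIntegrable_const
    ((hfA.add hgB).div_const (1 + r)) hpoint
  rw [intervalAverage_const h.lt, hmean] at hle
  contrapose! hle
  exact Real.one_lt_rpow ((one_lt_inv₀ (by positivity)).2 hle) (by positivity)

theorem muckenhouptPotential_eq (h : IsMuckenhouptPair r f g a b) (hw : w < 1) :
    muckenhouptPotential r w f g a b = Real.log (muckenhouptProduct r f g a b)
      + r * (1 + r) * w / (1 - w) * (Real.log (⨍ y in a..b, g y) + w * Real.log (b - a)) := by
  have hB := h.average_right_pos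
  have hba := (sub_pos.2 h.lt).ne'
  have hw' := (sub_pos.2 hw).ne'
  have hF := (integral_pos_of_mem_Ioc h.left_integrable h.left_pos ⟨h.lt, le_rfl⟩).ne'
  have hG := (integral_pos_of_mem_Ioc h.right_integrable h.right_pos ⟨h.lt, le_rfl⟩).ne'
  rw [muckenhouptProduct, Real.log_mul h.average_left_pos.ne' (Real.rpow_pos_of_pos hB r).ne',
    Real.log_rpow hB, interval_average_eq_div, interval_average_eq_div, Real.log_div hF hba,
    Real.log_div hG hba, muckenhouptPotential]
  field_simp
  ring

theorem ae_deriv_muckenhouptPotential_nonneg (h : IsMuckenhouptPair r f g a b) (hr : 0 ≤ r)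
    (hw0 : 0 ≤ w) (hw1 : w < 1)
    (hM : ∀ t ∈ Ioo a b, muckenhouptProduct r f g a t * ((1 + r * w) * (1 - w) ^ r) ≤ 1) :
    ∀ᵐ t, t ∈ Ioo a b → 0 ≤ deriv (muckenhouptPotential r w f g a) t := by
  filter_upwards [ae_hasDerivAt_log_integral h.left_integrable h.left_pos,
    ae_hasDerivAt_log_integral h.right_integrable h.right_pos] with t hF hG ht
  have hta : 0 < t - a := sub_pos.2 ht.1
  have hlog : HasDerivAt (fun x => Real.log (x - a)) (1 / (t - a)) t :=
    ((hasDerivAt_id t).sub_const a).log hta.ne'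
  have hderiv : HasDerivAt (muckenhouptPotential r w f g a) _ t :=
    ((hF ht).add ((hG ht).const_mul _)).sub (hlog.const_mul _)
  rw [hderiv.deriv, sub_nonneg, mul_one_div, div_le_iff₀ hta]
  have hAB := hM t ht
  rw [muckenhouptProduct] at hAB
  have hpair := h.of_mem_Ioc (Ioo_subset_Ioc_self ht)
  refine (le_div_add_mul_div_of_mul_rpow_le hr hw0 hw1 (h.left_pos t ht).le (h.right_pos t ht).le
    hpair.average_left_pos hpair.average_right_pos (h.one_le_mul_rpow t ht) hAB).trans_eq ?_
  rw [interval_average_eq_div, interval_average_eq_div]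
  field_simp

theorem monotoneOn_muckenhouptPotential (h : IsMuckenhouptPair r f g a b) (hr : 0 ≤ r)
    (hw0 : 0 ≤ w) (hw1 : w < 1)
    (hM : ∀ t ∈ Ioo a b, muckenhouptProduct r f g a t * ((1 + r * w) * (1 - w) ^ r) ≤ 1) :
    MonotoneOn (muckenhouptPotential r w f g a) (Ioc a b) := by
  intro s hs t ht hst
  have hsub : uIcc s t ⊆ uIcc s b := uIcc_subset_uIcc_left (Icc_subset_uIcc ⟨hst, ht.2⟩)
  have hlogF := absolutelyContinuousOnInterval_log_integral h.left_integrable h.left_pos hs.1 hs.2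
  have hlogG :=
    absolutelyContinuousOnInterval_log_integral h.right_integrable h.right_pos hs.1 hs.2
  have hlog : AbsolutelyContinuousOnInterval (fun x => Real.log (x - a)) s b := by
    simpa using absolutelyContinuousOnInterval_log_integral (f := fun _ => 1)
      intervalIntegrable_const (fun _ _ => one_pos) hs.1 hs.2
  refine le_of_absolutelyContinuousOnInterval_of_ae_deriv_nonneg hst
    (((hlogF.fun_add (hlogG.const_mul _)).fun_sub (hlog.const_mul _)).mono hsub) ?_
  filter_upwards [h.ae_deriv_muckenhouptPotential_nonneg hr hw0 hw1 hM] with x hx hxst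
  exact hx ⟨hs.1.trans hxst.1, hxst.2.trans_le ht.2⟩

theorem average_right_le (h : IsMuckenhouptPair r f g a b) (hr : 0 < r) (hw0 : 0 < w) (hw1 : w < 1)
    (hM : ∀ t ∈ Ioc a b, muckenhouptProduct r f g a t ≤ M)
    (hMw : M * ((1 + r * w) * (1 - w) ^ r) ≤ 1) {s : ℝ} (hs : s ∈ Ioc a b) :
    ⨍ y in a..s, g y ≤
      M ^ ((1 - w) / (r * (1 + r) * w)) * (⨍ y in a..b, g y) * ((b - a) / (s - a)) ^ w := by
  have : 0 < 1 - w := sub_pos.2 hw1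
  have hsa : 0 < s - a := sub_pos.2 hs.1
  have hba : 0 < b - a := sub_pos.2 h.lt
  have hb : b ∈ Ioc a b := ⟨h.lt, le_rfl⟩
  have hs' := h.of_mem_Ioc hs
  have hB := h.average_right_pos
  have hBs := hs'.average_right_pos
  have hQb := h.one_le_muckenhouptProduct hr.le
  have hM0 : 0 < M := one_pos.trans_le (hQb.trans (hM b hb))
  have hpot : muckenhouptPotential r w f g a s ≤ muckenhouptPotential r w f g a b :=
    h.monotoneOn_muckenhouptPotential hr.le hw0.le hw1 (fun t ht => hMw.trans' <|
      mul_le_mul_of_nonneg_right (hM t (Ioo_subset_Ioc_self ht)) (by positivity)) hs hb hs.2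
  rw [hs'.muckenhouptPotential_eq hw1, h.muckenhouptPotential_eq hw1] at hpot
  have hQs_log := Real.log_nonneg (hs'.one_le_muckenhouptProduct hr.le)
  have hQb_log := Real.log_le_log (one_pos.trans_le hQb) (hM b hb)
  set κ := r * (1 + r) * w / (1 - w) with hκ
  have hκ0 : 0 < κ := by positivity
  rw [← inv_div, ← hκ, ← Real.log_le_log_iff hBs (by positivity),
    Real.log_mul (by positivity) (by positivity), Real.log_mul (by positivity) hB.ne',
    Real.log_rpow hM0, Real.log_rpow (by positivity), Real.log_div hba.ne' hsa.ne']
  refine le_of_mul_le_mul_left ?_ hκ0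
  have : κ * (κ⁻¹ * Real.log M) = Real.log M := mul_inv_cancel_left₀ hκ0.ne' _
  linarith

theorem rpow_right_le (h : IsMuckenhouptPair r f g a b) (hg : AntitoneOn g (Ioo a b)) (hr : 0 < r)
    (hw0 : 0 < w) (hw1 : w < 1) (hM : ∀ t ∈ Ioc a b, muckenhouptProduct r f g a t ≤ M)
    (hMw : M * ((1 + r * w) * (1 - w) ^ r) ≤ 1) {e : ℝ} (he : 0 ≤ e) {s : ℝ} (hs : s ∈ Ioo a b) :
    g s ^ e ≤ (M ^ ((1 - w) / (r * (1 + r) * w)) * ⨍ y in a..b, g y) ^ e *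
      ((b - a) / (s - a)) ^ (w * e) := by
  have hs' := Ioo_subset_Ioc_self hs
  have hM0 : 0 ≤ M := zero_le_one.trans
    ((h.one_le_muckenhouptProduct hr.le).trans (hM b ⟨h.lt, le_rfl⟩))
  have hratio : 0 ≤ (b - a) / (s - a) := div_nonneg (sub_pos.2 h.lt).le (sub_pos.2 hs.1).le
  have hB := h.average_right_pos
  have hgs : g s ≤ ⨍ y in a..s, g y := le_intervalAverage_of_antitoneOn hs.1
    (hg.mono fun x hx => ⟨hx.1, hx.2.trans_lt hs.2⟩) (h.of_mem_Ioc hs').right_integrable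
  rw [Real.rpow_mul hratio, ← Real.mul_rpow (by positivity) (by positivity)]
  exact Real.rpow_le_rpow (h.right_pos s hs).le
    (hgs.trans (h.average_right_le hr hw0 hw1 hM hMw hs')) he

theorem intervalIntegrable_rpow_right (h : IsMuckenhouptPair r f g a b)
    (hg : AntitoneOn g (Ioo a b)) (hr : 0 < r) (hw0 : 0 < w) (hw1 : w < 1)
    (hM : ∀ t ∈ Ioc a b, muckenhouptProduct r f g a t ≤ M)
    (hMw : M * ((1 + r * w) * (1 - w) ^ r) ≤ 1) {e : ℝ} (he : 0 ≤ e) (hwe : w * e < 1) :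
    IntervalIntegrable (fun y => g y ^ e) volume a b := by
  have hdom := (intervalIntegrable_div_sub_rpow h.lt.le hwe).const_mul
    ((M ^ ((1 - w) / (r * (1 + r) * w)) * ⨍ y in a..b, g y) ^ e)
  rw [intervalIntegrable_iff_integrableOn_Ioo_of_le h.lt.le] at hdom ⊢
  refine hdom.mono' ((aemeasurable_restrict_of_antitoneOn measurableSet_Ioo hg).pow_const
    e).aestronglyMeasurable ?_
  filter_upwards [self_mem_ae_restrict measurableSet_Ioo] with s hs
  rw [Real.norm_of_nonneg (Real.rpow_nonneg (h.right_pos s hs).le e)]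
  exact h.rpow_right_le hg hr hw0 hw1 hM hMw he hs

theorem average_rpow_right_le (h : IsMuckenhouptPair r f g a b)
    (hg : AntitoneOn g (Ioo a b)) (hr : 0 < r) (hw0 : 0 < w) (hw1 : w < 1)
    (hM : ∀ t ∈ Ioc a b, muckenhouptProduct r f g a t ≤ M)
    (hMw : M * ((1 + r * w) * (1 - w) ^ r) ≤ 1) {e : ℝ} (he : 0 ≤ e) (hwe : w * e < 1) :
    ⨍ y in a..b, g y ^ e ≤
      (M ^ ((1 - w) / (r * (1 + r) * w)) * ⨍ y in a..b, g y) ^ e * (1 - w * e)⁻¹ := by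
  have hle := intervalAverage_mono_on_Ioo h.lt
    (h.intervalIntegrable_rpow_right hg hr hw0 hw1 hM hMw he hwe)
    ((intervalIntegrable_div_sub_rpow h.lt.le hwe).const_mul _)
    fun s hs => h.rpow_right_le hg hr hw0 hw1 hM hMw he hs
  rwa [interval_average_eq_div (fun y => _ * _), intervalIntegral.integral_const_mul,
    mul_div_assoc, ← interval_average_eq_div, intervalAverage_div_sub_rpow h.lt hwe] at hle

theorem muckenhouptProduct_rpow_right_le (h : IsMuckenhouptPair r f g a b)
    (hg : AntitoneOn g (Ioo a b)) (hr : 0 < r) (hw0 : 0 < w) (hw1 : w < 1)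
    (hM : ∀ t ∈ Ioc a b, muckenhouptProduct r f g a t ≤ M)
    (hMw : M * ((1 + r * w) * (1 - w) ^ r) ≤ 1) {ρ : ℝ} (hρ : r * w < ρ) :
    muckenhouptProduct ρ f (fun y => g y ^ (r / ρ)) a b ≤
      M * (M ^ ((1 - w) / (r * (1 + r) * w))) ^ r * (1 - r * w / ρ)⁻¹ ^ ρ := by
  have hρ0 : 0 < ρ := (mul_pos hr hw0).trans hρ
  have hwe : w * (r / ρ) < 1 := by rwa [mul_div_assoc', mul_comm, div_lt_one hρ0]
  have hwe' : 0 ≤ (1 - w * (r / ρ))⁻¹ := inv_nonneg.2 (sub_pos.2 hwe).le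
  have hb := hM b ⟨h.lt, le_rfl⟩
  have hM0 : 0 ≤ M := zero_le_one.trans ((h.one_le_muckenhouptProduct hr.le).trans hb)
  have hA := h.average_left_pos
  have hB := h.average_right_pos
  set A := ⨍ y in a..b, f y with hA_def
  set B := ⨍ y in a..b, g y with hB_def
  set C := M ^ ((1 - w) / (r * (1 + r) * w)) with hC_def
  have hC : 0 ≤ C := Real.rpow_nonneg hM0 _
  calc A * (⨍ y in a..b, g y ^ (r / ρ)) ^ ρ
      ≤ A * ((C * B) ^ (r / ρ) * (1 - w * (r / ρ))⁻¹) ^ ρ := by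
        gcongr
        · exact (intervalAverage_pos h.lt
            (h.intervalIntegrable_rpow_right hg hr hw0 hw1 hM hMw (by positivity) hwe)
            fun x hx => Real.rpow_pos_of_pos (h.right_pos x hx) _).le
        · exact h.average_rpow_right_le hg hr hw0 hw1 hM hMw (by positivity) hwe
    _ = A * B ^ r * C ^ r * (1 - r * w / ρ)⁻¹ ^ ρ := by
        rw [Real.mul_rpow (by positivity) hwe', ← Real.rpow_mul (by positivity),
          div_mul_cancel₀ r hρ0.ne', Real.mul_rpow hC hB.le, mul_div_assoc', mul_comm w r]
        ring
    _ ≤ M * C ^ r * (1 - r * w / ρ)⁻¹ ^ ρ := by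
        rw [mul_div_assoc', mul_comm w r] at hwe'
        gcongr
        exact hb

end IsMuckenhouptPair

section MonotoneWeight

variable {f g : ℝ → ℝ} {a b r M : ℝ}

theorem intervalIntegrable_of_antitoneOn_Ico_of_nonneg (hab : a ≤ b) (hg : AntitoneOn g (Ico a b))
    (hg0 : ∀ x ∈ Ico a b, 0 ≤ g x) : IntervalIntegrable g volume a b := by
  have hext : AntitoneOn (Function.update g b 0) (uIcc a b) := by
    rw [uIcc_of_le hab]
    intro x hx y hy hxy
    rcases hy.2.eq_or_lt with rfl | hyb
    · rcases hx.2.eq_or_lt with rfl | hxb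
      · exact le_rfl
      · simpa [hxb.ne] using hg0 x ⟨hx.1, hxb⟩
    · have hxb := hxy.trans_lt hyb
      simpa [hxb.ne, hyb.ne] using hg ⟨hx.1, hxb⟩ ⟨hy.1, hyb⟩ hxy
  refine hext.intervalIntegrable.congr_uIoo fun x hx => Function.update_of_ne ?_ _ _
  rw [uIoo_of_le hab] at hx
  exact hx.2.ne

theorem integral_le_of_muckenhouptProduct_le (hr : 0 ≤ r) (hf0 : ∀ x ∈ Ioo a b, 0 ≤ f x)
    (hg : IntervalIntegrable g volume a b) (hg0 : ∀ x ∈ Ioo a b, 0 < g x) {c t : ℝ}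
    (hac : a < c) (hct : c ≤ t) (htb : t < b)
    (hM : muckenhouptProduct r f g a t ≤ M) :
    ∫ y in a..t, f y ≤ (b - a) * (M / ((∫ y in a..c, g y) / (b - a)) ^ r) := by
  have hat : a < t := hac.trans_le hct
  have hta : 0 < t - a := sub_pos.2 hat
  have hba : 0 < b - a := sub_pos.2 (hat.trans htb)
  have hsub : Ioc a t ⊆ Ioo a b := fun x hx => ⟨hx.1, hx.2.trans_lt htb⟩
  have hGc : 0 < ∫ y in a..c, g y :=
    integral_pos_of_mem_Ioc hg hg0 ⟨hac, hct.trans htb.le⟩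
  have hGct : ∫ y in a..c, g y ≤ ∫ y in a..t, g y := by
    refine intervalIntegral.integral_mono_interval le_rfl hac.le hct ?_
      (hg.mono_set (uIcc_subset_uIcc_left (Icc_subset_uIcc ⟨hat.le, htb.le⟩)))
    filter_upwards [self_mem_ae_restrict measurableSet_Ioc] with x hx
    exact (hg0 x (hsub hx)).le
  have hF : 0 ≤ ∫ y in a..t, f y := by
    rw [intervalIntegral.integral_of_le hat.le]
    exact setIntegral_nonneg measurableSet_Ioc fun x hx => hf0 x (hsub hx)
  rw [muckenhouptProduct, interval_average_eq_div, interval_average_eq_div] at hM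
  have havg : (∫ y in a..t, f y) / (t - a) ≤ M / ((∫ y in a..c, g y) / (b - a)) ^ r := by
    rw [le_div_iff₀ (by positivity)]
    refine hM.trans' (mul_le_mul_of_nonneg_left ?_ (by positivity))
    gcongr
    exact hGc.le.trans hGct
  rw [← mul_div_cancel₀ (∫ y in a..t, f y) hta.ne']
  gcongr

theorem intervalIntegrable_of_muckenhouptProduct_le (hab : a < b) (hr : 0 ≤ r)
    (hf : ∀ t ∈ Ioo a b, IntervalIntegrable f volume a t) (hf0 : ∀ x ∈ Ioo a b, 0 ≤ f x)
    (hg : IntervalIntegrable g volume a b) (hg0 : ∀ x ∈ Ioo a b, 0 < g x)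
    (hM : ∀ t ∈ Ioo a b, muckenhouptProduct r f g a t ≤ M) : IntervalIntegrable f volume a b := by
  obtain ⟨c, hac, hcb⟩ := exists_between hab
  obtain ⟨u, -, hu, hub⟩ := exists_seq_strictMono_tendsto' hcb
  have hau : ∀ n, u n ∈ Ioo a b := fun n => ⟨hac.trans (hu n).1, (hu n).2⟩
  rw [intervalIntegrable_iff_integrableOn_Ioc_of_le hab.le]
  refine integrableOn_Ioc_of_intervalIntegral_norm_bounded_right (fun n => (hf (u n) (hau n)).1) hub
    (I := (b - a) * (M / ((∫ y in a..c, g y) / (b - a)) ^ r)) (.of_forall fun n => ?_)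
  refine (integral_le_of_muckenhouptProduct_le hr hf0 hg hg0 hac (hu n).1.le (hu n).2
    (hM (u n) (hau n))).trans_eq' ?_
  rw [intervalIntegral.integral_of_le (hau n).1.le]
  exact setIntegral_congr_fun measurableSet_Ioc fun x hx =>
    (Real.norm_of_nonneg (hf0 x ⟨hx.1, hx.2.trans_lt (hau n).2⟩)).symm

theorem antitoneOn_rpow_neg_inv (hr : 0 ≤ r) {s : Set ℝ} (hf : MonotoneOn f s)
    (hf0 : ∀ x ∈ s, 0 < f x) : AntitoneOn (fun y => f y ^ (-(1 / r))) s :=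
  fun x hx _ hy hxy => Real.rpow_le_rpow_of_nonpos (hf0 x hx) (hf hx hy hxy)
    (neg_nonpos.2 (one_div_nonneg.2 hr))

theorem intervalIntegrable_rpow_neg_inv (hab : a ≤ b) (hr : 0 ≤ r) (hf : MonotoneOn f (Ico a b))
    (hf0 : ∀ x ∈ Ico a b, 0 < f x) :
    IntervalIntegrable (fun y => f y ^ (-(1 / r))) volume a b :=
  intervalIntegrable_of_antitoneOn_Ico_of_nonneg hab (antitoneOn_rpow_neg_inv hr hf hf0)
    fun x hx => (Real.rpow_pos_of_pos (hf0 x hx) _).le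

theorem isMuckenhouptPair_of_monotoneOn (hab : a < b) (hr : 0 < r)
    (hf : MonotoneOn f (Ico a b)) (hf0 : ∀ x ∈ Ico a b, 0 < f x)
    (hM : ∀ t ∈ Ioo a b, muckenhouptProduct r f (fun y => f y ^ (-(1 / r))) a t ≤ M) :
    IsMuckenhouptPair r f (fun y => f y ^ (-(1 / r))) a b := by
  have hf0' : ∀ x ∈ Ioo a b, 0 < f x := fun x hx => hf0 x (Ioo_subset_Ico_self hx)
  have hg0 : ∀ x ∈ Ioo a b, 0 < f x ^ (-(1 / r)) := fun x hx => Real.rpow_pos_of_pos (hf0' x hx) _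
  have hg := intervalIntegrable_rpow_neg_inv hab.le hr.le hf hf0
  have hf_left : ∀ t ∈ Ioo a b, IntervalIntegrable f volume a t := fun t ht => by
    refine MonotoneOn.intervalIntegrable (hf.mono ?_)
    rw [uIcc_of_le ht.1.le]
    exact Icc_subset_Ico_right ht.2
  refine ⟨hab, intervalIntegrable_of_muckenhouptProduct_le hab hr.le hf_left
    (fun x hx => (hf0' x hx).le) hg hg0 hM, hg, hf0', hg0, fun x hx => ?_⟩
  rw [← Real.rpow_mul (hf0' x hx).le, neg_mul, one_div_mul_cancel hr.ne', Real.rpow_neg_one,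
    mul_inv_cancel₀ (hf0' x hx).ne']

end MonotoneWeight

theorem exists_exponent_of_rpow_eq_one {q M p₀ p : ℝ} (hq : 1 < q) (hM : 0 < M) (hp₀ : 1 ≤ p₀)
    (hp₀eq : (q - p₀) / (q - 1) * (M * p₀) ^ (1 / (q - 1)) = 1) (hp : p₀ < p) :
    ∃ w, 0 < w ∧ w < 1 ∧ (q - 1) * w < p - 1 ∧
      M * ((1 + (q - 1) * w) * (1 - w) ^ (q - 1)) ≤ 1 := by
  have hr : 0 < q - 1 := sub_pos.2 hq
  have hMp₀ : 0 ≤ M * p₀ := by positivity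
  have hpos : 0 < (q - p₀) / (q - 1) :=
    pos_of_mul_pos_left (hp₀eq ▸ one_pos) (Real.rpow_nonneg hMp₀ _)
  set w₀ := (p₀ - 1) / (q - 1) with hw₀
  have hw₀_nonneg : 0 ≤ w₀ := div_nonneg (sub_nonneg.2 hp₀) hr.le
  have hp₀_eq : p₀ = 1 + (q - 1) * w₀ := by rw [hw₀]; field_simp; ring
  have hone_sub : (q - p₀) / (q - 1) = 1 - w₀ := by rw [hw₀]; field_simp; ring
  rw [hone_sub] at hpos hp₀eq
  have hcritical : M * ((1 + (q - 1) * w₀) * (1 - w₀) ^ (q - 1)) = 1 := by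
    have h := congrArg (· ^ (q - 1)) hp₀eq
    rw [Real.mul_rpow hpos.le (by positivity), ← Real.rpow_mul hMp₀, one_div_mul_cancel hr.ne',
      Real.rpow_one, Real.one_rpow] at h
    rw [← hp₀_eq]
    linarith
  obtain ⟨w, hw₀w, hw⟩ : ∃ w, w₀ < w ∧ w < min ((p - 1) / (q - 1)) 1 :=
    exists_between (lt_min (by rw [hw₀]; gcongr) (sub_pos.1 hpos))
  obtain ⟨hwp, hw1⟩ := lt_min_iff.1 hw
  have hw0 : 0 < w := hw₀_nonneg.trans_lt hw₀w
  refine ⟨w, hw0, hw1, (lt_div_iff₀' hr).1 hwp, hcritical.le.trans' ?_⟩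
  refine mul_le_mul_of_nonneg_left ?_ hM.le
  exact antitoneOn_one_add_mul_mul_one_sub_rpow hr.le ⟨hw₀_nonneg, sub_pos.1 hpos⟩
    ⟨hw0.le, hw1⟩ hw₀w.le

theorem muckenhoupt_Ap_from_Aq_general {q M p₀ p : ℝ} (hq : 1 < q) (hM : 0 < M) (hp₀ : 1 ≤ p₀)
    (hp₀eq : (q - p₀) / (q - 1) * (M * p₀) ^ (1 / (q - 1)) = 1) (hp : p₀ < p) :
    ∃ M', 0 < M' ∧ ∀ (f : ℝ → ℝ) (a b : ℝ), a < b →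
      MonotoneOn f (Ico a b) → (∀ x ∈ Ico a b, 0 < f x) →
      (∀ t ∈ Ioc a b, muckenhouptProduct (q - 1) f (fun y => f y ^ (-(1 / (q - 1)))) a t ≤ M) →
      muckenhouptProduct (p - 1) f (fun y => f y ^ (-(1 / (p - 1)))) a b ≤ M' ∧
        IntegrableOn (fun y => f y ^ (-(1 / (p - 1)))) (Ioo a b) := by
  obtain ⟨w, hw0, hw1, hwp, hMw⟩ := exists_exponent_of_rpow_eq_one hq hM hp₀ hp₀eq hp
  have hr : 0 < q - 1 := sub_pos.2 hq
  have hρ : 0 < p - 1 := sub_pos.2 (hp₀.trans_lt hp)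
  have hgap : 0 < 1 - (q - 1) * w / (p - 1) := sub_pos.2 ((div_lt_one hρ).2 hwp)
  refine ⟨M * (M ^ ((1 - w) / ((q - 1) * (1 + (q - 1)) * w))) ^ (q - 1) *
    (1 - (q - 1) * w / (p - 1))⁻¹ ^ (p - 1), by positivity, fun f a b hab hf hf0 hAq => ?_⟩
  have hpair := isMuckenhouptPair_of_monotoneOn hab hr hf hf0
    fun t ht => hAq t (Ioo_subset_Ioc_self ht)
  have hanti := (antitoneOn_rpow_neg_inv hr.le hf hf0).mono Ioo_subset_Ico_self
  have hpow : EqOn (fun y => (f y ^ (-(1 / (q - 1)))) ^ ((q - 1) / (p - 1)))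
      (fun y => f y ^ (-(1 / (p - 1)))) (Ioo a b) := fun y hy => by
    dsimp only
    rw [← Real.rpow_mul (hf0 y (Ioo_subset_Ico_self hy)).le]
    congr 1
    field_simp
  have hAp := hpair.muckenhouptProduct_rpow_right_le hanti hr hw0 hw1 hAq hMw hwp
  rw [muckenhouptProduct, interval_average_eq (fun y => _ ^ _),
    intervalIntegral.integral_congr_Ioo_of_le hab.le hpow, ← interval_average_eq] at hAp
  exact ⟨hAp, (intervalIntegrable_iff_integrableOn_Ioo_of_le hab.le).1
    (intervalIntegrable_rpow_neg_inv hab.le hρ.le hf hf0)⟩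

/-- **Theorem E.** Let `q > 1`, `M ≥ 1`, and let `p₀ ∈ [1,q]` be the root of
`((q−p₀)/(q−1))(M p₀)^{1/(q-1)} = 1`. For every `p ∈ (p₀, q]` there is a constant
`M' = M'(p,q,M) > 0` such that every non-decreasing `f : [0,1) → (0,∞)` satisfying the
`A_q` condition with constant `M` on every subinterval `(a,b) ⊆ [0,1)` satisfies the
`A_p` condition with constant `M'` on every such subinterval; in particular
`f^{-1/(p-1)}` is integrable on `(0,1)`. -/
theorem muckenhoupt_Ap_from_Aq (q M p₀ p : ℝ)
    (hq : 1 < q) (hM : 1 ≤ M) (hp₀mem : p₀ ∈ Set.Icc 1 q)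
    (hp₀eq : ((q - p₀) / (q - 1)) * (M * p₀) ^ (1 / (q - 1)) = 1)
    (hp : p ∈ Set.Ioc p₀ q) :
    ∃ M' : ℝ, 0 < M' ∧ ∀ f : ℝ → ℝ, Measurable f →
      MonotoneOn f (Set.Ico 0 1) →
      (∀ x ∈ Set.Ico (0 : ℝ) 1, 0 < f x) →
      (∀ a b : ℝ, 0 ≤ a → a < b → b ≤ 1 →
        ((1 / (b - a)) * ∫ y in a..b, f y) *
          ((1 / (b - a)) * ∫ y in a..b, f y ^ (-(1 / (q - 1)))) ^ (q - 1) ≤ M) →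
      (∀ a b : ℝ, 0 ≤ a → a < b → b ≤ 1 →
        ((1 / (b - a)) * ∫ y in a..b, f y) *
          ((1 / (b - a)) * ∫ y in a..b, f y ^ (-(1 / (p - 1)))) ^ (p - 1) ≤ M') ∧
      IntegrableOn (fun y => f y ^ (-(1 / (p - 1)))) (Set.Ioo 0 1) := by
  obtain ⟨M', hM', hAp⟩ :=
    muckenhoupt_Ap_from_Aq_general hq (one_pos.trans_le hM) hp₀mem.1 hp₀eq hp.1
  refine ⟨M', hM', fun f _ hf hf0 hAq => ?_⟩
  have hsub : ∀ a b : ℝ, 0 ≤ a → b ≤ 1 → Ico a b ⊆ Ico 0 1 := fun _ _ => Ico_subset_Ico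
  simp only [muckenhouptProduct, interval_average_eq, smul_eq_mul, ← one_div] at hAp
  have hAp' := fun a b ha hab hb => hAp f a b hab (hf.mono (hsub a b ha hb))
    (fun x hx => hf0 x (hsub a b ha hb hx)) fun t ht => hAq a t ha ht.1 (ht.2.trans hb)
  exact ⟨fun a b ha hab hb => (hAp' a b ha hab hb).1, (hAp' 0 1 le_rfl one_pos le_rfl).2⟩
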